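/- arXiv:1801.08778 — 5 statements merged into one kernel-verified Lean document; each statement's English description precedes it below -/
import Mathlib

section
/- Let ϖ : ℕ → A be the unique one-sided infinite word over A having every block p_k as a prefix (it exists since each p_k is a prefix of p_{k+1} and |p_k| → ∞). Then ϖ is periodic — i.e. there exists p ≥ 1 with ϖ(j+p) = ϖ(j) for all j ∈ ℕ — if and only if #A_ev = 1. -/
/-!
Put `Q k = n 0 * ⋯ * n (k - 1)`, so that `|p k| + 1 = Q (k + 1)`. Numbering positions from `1`, the
letter of `ϖ` at position `i` is `a k` for the level `k` with `Q k ∣ i` and `¬ Q (k + 1) ∣ i`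
(`word_eq`); this level is unique because the `Q k` form a divisibility chain.

If `ϖ` has period `p` and `p` has level `k`, then for every `m > k` the position `Q m` has level `m`
whereas `Q m + p` has level `k`, whence `a m = a k`: the sequence `a` is eventually constant.
Conversely, if `a` is constant from index `K` on, then `Q K` is a period: a position not divisible
by `Q K` keeps its level when shifted by `Q K`, and positions divisible by `Q K` have level at least
`K`, so they all carry the same letter. Since `A` is finite, `a` is eventually constant exactly when
`Aev a` is a singleton (`aev_ncard_eq_one_iff`).
-/

open Filter

/-- The blocks `p k` of the simple Toeplitz subshift coded by `a` and `n`: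
`p 0 = a 0 ^ (n 0 - 1)` and `p (k+1)` consists of `n (k+1)` copies of `p k`
separated by `n (k+1) - 1` single letters `a (k+1)`. -/
def ToeplitzBlock {A : Type*} (a : ℕ → A) (n : ℕ → ℕ) : ℕ → List A
  | 0 => List.replicate (n 0 - 1) (a 0)
  | k + 1 => List.intercalate [a (k + 1)] (List.replicate (n (k + 1)) (ToeplitzBlock a n k))

/-- `lenPrev a n k = |p (k-1)|`, with the convention `|p (-1)| = 0`. -/
def lenPrev {A : Type*} (a : ℕ → A) (n : ℕ → ℕ) : ℕ → ℕ
  | 0 => 0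
  | k + 1 => (ToeplitzBlock a n k).length

/-- The language of the simple Toeplitz subshift: all finite words occurring as a
factor of some block `p k`. -/
def ToeplitzLang {A : Type*} (a : ℕ → A) (n : ℕ → ℕ) : Set (List A) :=
  {u | ∃ k, u <:+: ToeplitzBlock a n k}

/-- The complexity function `C L`. -/
noncomputable def cmpl {A : Type*} (a : ℕ → A) (n : ℕ → ℕ) (L : ℕ) : ℕ :=
  Set.ncard {u | u ∈ ToeplitzLang a n ∧ u.length = L}

/-- The palindrome complexity function `P L`. -/
noncomputable def palCmpl {A : Type*} (a : ℕ → A) (n : ℕ → ℕ) (L : ℕ) : ℕ :=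
  Set.ncard {u | u ∈ ToeplitzLang a n ∧ u.length = L ∧ u.reverse = u}

/-- `Ak a k = {a j : j ≥ k}`. -/
def Ak {A : Type*} (a : ℕ → A) (k : ℕ) : Set A := {x | ∃ j, k ≤ j ∧ a j = x}

/-- The eventual alphabet `A_ev = ⋂ k, A_k`. -/
def Aev {A : Type*} (a : ℕ → A) : Set A := ⋂ k, Ak a k

/-- `Kf a k = min {j > k : {a (k+1), …, a j} = A (k+1)}`. -/
noncomputable def Kf {A : Type*} (a : ℕ → A) (k : ℕ) : ℕ :=
  sInf {j | k < j ∧ {x | ∃ i, k + 1 ≤ i ∧ i ≤ j ∧ a i = x} = Ak a (k + 1)}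

/-- The positions `m i` at which `Kf` increases: `m 0 = 0` and
`m (i+1) = min {j > m i : Kf j > Kf (m i)}`. -/
noncomputable def mseq {A : Type*} (a : ℕ → A) : ℕ → ℕ
  | 0 => 0
  | i + 1 => sInf {j | mseq a i < j ∧ Kf a (mseq a i) < Kf a j}

/-- The repetitivity function `R L`: the least `L'` such that every word of
length `L` of the language is a factor of every word of length `L'`. -/
noncomputable def repet {A : Type*} (a : ℕ → A) (n : ℕ → ℕ) (L : ℕ) : ℕ :=
  sInf {L' | ∀ u ∈ ToeplitzLang a n, u.length = L →
    ∀ w ∈ ToeplitzLang a n, w.length = L' → u <:+: w}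

lemma intercalate_replicate_length {A : Type*} (x : A) (w : List A) (m : ℕ) :
    (List.intercalate [x] (List.replicate (m + 1) w)).length + 1 = (m + 1) * (w.length + 1) := by
  induction m with
  | zero => simp
  | succ m ih =>
    rw [List.replicate_succ, List.replicate_succ, List.intercalate_cons_cons,
      ← List.replicate_succ]
    simp only [List.length_append, List.length_cons, List.length_nil]
    linarith

/-- The letters of `w x w x ⋯ x w`: the separators `x` sit at the positions (counted from `1`)
divisible by `|w| + 1`, and the other letters are read off periodically from `w`. -/
lemma intercalate_replicate_getElem? {A : Type*} (x : A) (w : List A) (m j : ℕ)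
    (hj : j + 1 < (m + 1) * (w.length + 1)) :
    (List.intercalate [x] (List.replicate (m + 1) w))[j]? =
      if w.length + 1 ∣ j + 1 then some x else w[j % (w.length + 1)]? := by
  induction m generalizing j with
  | zero =>
    have h : ¬ w.length + 1 ∣ j + 1 := fun h => by
      have := Nat.le_of_dvd (by omega) h
      omega
    rw [if_neg h, Nat.mod_eq_of_lt (by omega)]
    simp
  | succ m ih =>
    rw [List.replicate_succ, List.replicate_succ, List.intercalate_cons_cons,
      ← List.replicate_succ]
    rcases lt_trichotomy j w.length with h | h | h
    · have h' : ¬ w.length + 1 ∣ j + 1 := fun h => by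
        have := Nat.le_of_dvd (by omega) h
        omega
      rw [if_neg h', Nat.mod_eq_of_lt (by omega), List.append_assoc, List.getElem?_append_left h]
    · subst h
      simp
    · obtain ⟨i, rfl⟩ : ∃ i, j = i + (w.length + 1) := ⟨j - (w.length + 1), by omega⟩
      rw [List.getElem?_append_right (by simp)]
      have e : i + (w.length + 1) + 1 = (i + 1) + (w.length + 1) := by ring
      simp only [e, Nat.dvd_add_self_right, Nat.add_mod_right]
      have := ih i (by
        rw [e, add_mul (m + 1) 1, one_mul] at hj
        omega)
      rw [← this]
      congr 1
      simp

/-- `Q n k = n 0 * ⋯ * n (k - 1)`, the product of the first `k` terms; thus `Q n 0 = 1` and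
`Q n (k + 1) = |p k| + 1`. -/
def Q (n : ℕ → ℕ) (k : ℕ) : ℕ := ∏ i ∈ Finset.range k, n i

lemma Q_succ (n : ℕ → ℕ) (k : ℕ) : Q n (k + 1) = Q n k * n k := Finset.prod_range_succ _ _

lemma Q_dvd (n : ℕ → ℕ) {k l : ℕ} (h : k ≤ l) : Q n k ∣ Q n l :=
  Finset.prod_dvd_prod_of_subset _ _ _ (Finset.range_subset_range.2 h)

lemma lt_Q {n : ℕ → ℕ} (hn : ∀ k, 2 ≤ n k) (k : ℕ) : k < Q n k := by
  induction k with
  | zero => simp [Q]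
  | succ k ih =>
    rw [Q_succ]
    nlinarith [hn k]

lemma block_length {A : Type*} (a : ℕ → A) {n : ℕ → ℕ} (hn : ∀ k, 2 ≤ n k) (k : ℕ) :
    (ToeplitzBlock a n k).length + 1 = Q n (k + 1) := by
  induction k with
  | zero =>
    have := hn 0
    simp [ToeplitzBlock, Q]
    omega
  | succ k ih =>
    obtain ⟨m, hm⟩ : ∃ m, n (k + 1) = m + 1 := ⟨n (k + 1) - 1, by have := hn (k + 1); omega⟩
    rw [Q_succ n (k + 1), ← ih, ToeplitzBlock, hm, intercalate_replicate_length, mul_comm]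

lemma block_getElem? {A : Type*} (a : ℕ → A) {n : ℕ → ℕ} (hn : ∀ k, 2 ≤ n k) (K k j : ℕ)
    (hj : j + 1 < Q n (K + 1)) (h1 : Q n k ∣ j + 1) (h2 : ¬ Q n (k + 1) ∣ j + 1) :
    (ToeplitzBlock a n K)[j]? = some (a k) := by
  have hk : ∀ l, Q n l ∣ j + 1 → l ≤ k := fun l hl => by
    by_contra! h
    exact h2 ((Q_dvd n h).trans hl)
  have hk' : ∀ l, ¬ Q n l ∣ j + 1 → k < l := fun l hl => by
    by_contra! h
    exact hl ((Q_dvd n h).trans h1)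
  induction K generalizing j with
  | zero =>
    have : k < 1 := hk' 1 (Nat.not_dvd_of_pos_of_lt (by omega) hj)
    obtain rfl : k = 0 := by omega
    simp [Q] at hj
    simp only [ToeplitzBlock]
    rw [List.getElem?_replicate, if_pos (by omega)]
  | succ K ih =>
    have hlen := block_length a hn K
    obtain ⟨m, hm⟩ : ∃ m, n (K + 1) = m + 1 := ⟨n (K + 1) - 1, by have := hn (K + 1); omega⟩
    have hlt : k < K + 2 := hk' _ (Nat.not_dvd_of_pos_of_lt (by omega) hj)
    rw [ToeplitzBlock, hm, intercalate_replicate_getElem? _ _ _ _ (by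
      rw [hlen, mul_comm, ← hm, ← Q_succ]; exact hj), hlen]
    split_ifs with h
    · have := hk _ h
      obtain rfl : k = K + 1 := by omega
      rfl
    · have hkK : k < K + 1 := hk' _ h
      have hpos : 0 < Q n (K + 1) := by omega
      -- reduction modulo `Q n (K + 1)` does not affect divisibility by the earlier `Q n l`
      have key : ∀ l, l ≤ K + 1 → (Q n l ∣ j % Q n (K + 1) + 1 ↔ Q n l ∣ j + 1) := fun l hl =>
        (((Nat.mod_modEq j (Q n (K + 1))).of_dvd (Q_dvd n hl)).add_right 1).dvd_iff dvd_rfl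
      have hmod := Nat.mod_lt j hpos
      have hne : j % Q n (K + 1) + 1 ≠ Q n (K + 1) := fun e =>
        h ((key _ le_rfl).1 (by rw [e]))
      have g1 := (key k (by omega)).2 h1
      have g2 := mt (key (k + 1) (by omega)).1 h2
      refine ih _ (by omega) g1 g2 (fun l hl => ?_) (fun l hl => ?_)
      · by_contra! h
        exact g2 ((Q_dvd n h).trans hl)
      · by_contra! h
        exact hl ((Q_dvd n h).trans g1)

/-- The letter of `ϖ` at position `j + 1` is determined by the level of `j + 1` in the divisibility
chain of the `Q n k`. -/
lemma word_eq {A : Type*} {a : ℕ → A} {n : ℕ → ℕ} (hn : ∀ k, 2 ≤ n k) {ϖ : ℕ → A}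
    (hϖ : ∀ k, ToeplitzBlock a n k = (List.range (ToeplitzBlock a n k).length).map ϖ)
    {k j : ℕ} (h1 : Q n k ∣ j + 1) (h2 : ¬ Q n (k + 1) ∣ j + 1) : ϖ j = a k := by
  have hj : j + 1 < Q n (j + 1 + 1) := (Nat.lt_succ_self _).trans (lt_Q hn _)
  have h := block_getElem? a hn (j + 1) k j hj h1 h2
  have hl := block_length a hn (j + 1)
  rw [hϖ, List.getElem?_map, List.getElem?_range (by omega)] at h
  simpa using h

lemma exists_level {n : ℕ → ℕ} (hn : ∀ k, 2 ≤ n k) {i : ℕ} (hi : 1 ≤ i) :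
    ∃ k, Q n k ∣ i ∧ ¬ Q n (k + 1) ∣ i := by
  classical
  have hex : ∃ k, ¬ Q n k ∣ i := ⟨i, Nat.not_dvd_of_pos_of_lt hi (lt_Q hn i)⟩
  obtain ⟨k, hk⟩ : ∃ k, Nat.find hex = k + 1 := by
    refine Nat.exists_eq_succ_of_ne_zero fun h => Nat.find_spec hex ?_
    rw [h]
    simp [Q]
  refine ⟨k, ?_, hk ▸ Nat.find_spec hex⟩
  by_contra h
  have := Nat.find_min' hex h
  omega

lemma aev_ncard_eq_one_iff {A : Type*} [Fintype A] (a : ℕ → A) :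
    (Aev a).ncard = 1 ↔ ∃ c K, ∀ m, K ≤ m → a m = c := by
  have hmem : ∀ x, x ∈ Aev a ↔ ∃ᶠ m in atTop, a m = x := fun x => by
    simp [Aev, Ak, frequently_atTop]
  rw [Set.ncard_eq_one]
  refine exists_congr fun c => ?_
  rw [← eventually_atTop (p := fun m => a m = c)]
  constructor
  · intro h
    -- finiteness of `A`: the finitely many letters `x ≠ c` each occur only finitely often
    have hall : ∀ᶠ m in atTop, ∀ x, x ≠ c → a m ≠ x := by
      rw [eventually_all]
      intro x
      by_cases hx : x = c
      · simp [hx]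
      · have : x ∉ Aev a := by simpa [h] using hx
        rw [hmem, not_frequently] at this
        exact this.mono fun m hm _ => hm
    filter_upwards [hall] with m hm
    by_contra hc
    exact hm _ hc rfl
  · intro h
    ext x
    rw [hmem, Set.mem_singleton_iff]
    constructor
    · intro hx
      obtain ⟨m, h1, h2⟩ := (hx.and_eventually h).exists
      exact h1.symm.trans h2
    · rintro rfl
      exact h.frequently

/-- the one-sided infinite word `ϖ` having every block `p k` as a
prefix is periodic iff the eventual alphabet is a singleton. -/
theorem stmt0 {A : Type*} [Fintype A] [Nonempty A]
    (a : ℕ → A) (n : ℕ → ℕ) (hn : ∀ k, 2 ≤ n k)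
    (ϖ : ℕ → A)
    (hϖ : ∀ k, ToeplitzBlock a n k = (List.range (ToeplitzBlock a n k).length).map ϖ) :
    (∃ p, 1 ≤ p ∧ ∀ j, ϖ (j + p) = ϖ j) ↔ (Aev a).ncard = 1 := by
  rw [aev_ncard_eq_one_iff]
  constructor
  · rintro ⟨p, hp, hper⟩
    obtain ⟨k, h1, h2⟩ := exists_level hn hp
    refine ⟨a k, k + 1, fun m hm => ?_⟩
    have hpos : 0 < Q n m := (Nat.zero_le m).trans_lt (lt_Q hn m)
    have e : Q n m - 1 + 1 = Q n m := Nat.sub_add_cancel hpos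
    have e' : Q n m - 1 + p + 1 = Q n m + p := by omega
    have hm1 : ϖ (Q n m - 1) = a m := by
      refine word_eq hn hϖ (by rw [e]) ?_
      rw [e]
      refine Nat.not_dvd_of_pos_of_lt hpos ?_
      rw [Q_succ]
      nlinarith [hn m]
    have hm2 : ϖ (Q n m - 1 + p) = a k := by
      refine word_eq hn hϖ ?_ ?_
      · rw [e']
        exact (Q_dvd n (by omega)).add h1
      · rw [e', Nat.dvd_add_right (Q_dvd n hm)]
        exact h2
    rw [← hm1, ← hm2, hper]
  · rintro ⟨c, K, hK⟩
    refine ⟨Q n K, (Nat.zero_le K).trans_lt (lt_Q hn K), fun j => ?_⟩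
    have e : j + Q n K + 1 = j + 1 + Q n K := by ring
    -- a position divisible by `Q n K` has level at least `K`
    have hc : ∀ i, Q n K ∣ i + 1 → ϖ i = c := fun i hi => by
      obtain ⟨k, h1, h2⟩ := exists_level hn (Nat.succ_pos i)
      rw [word_eq hn hϖ h1 h2]
      refine hK k ?_
      by_contra! h
      exact h2 ((Q_dvd n h).trans hi)
    by_cases hd : Q n K ∣ j + 1
    · rw [hc j hd, hc _ (by rw [e]; exact hd.add dvd_rfl)]
    · obtain ⟨k, h1, h2⟩ := exists_level hn (Nat.succ_pos j)
      have hk : k < K := by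
        by_contra! h
        exact hd ((Q_dvd n h).trans h1)
      rw [word_eq hn hϖ h1 h2]
      refine word_eq hn hϖ ?_ ?_
      · rw [e]
        exact h1.add (Q_dvd n hk.le)
      · rw [e, ← Nat.dvd_add_iff_left (Q_dvd n hk)]
        exact h2
end

section
/- For every k ≥ 0 and every word u ∈ 𝓛 with |u| ≤ |p_k| + 1, there exists a letter b ∈ A_{k+1} such that u is a factor of the word p_k · b · p_k (the concatenation of p_k, the single letter b, and p_k). -/
/-!
For `m ≥ k` the block `p m` is a concatenation `p k · b₁ · p k · b₂ ⋯ b_r · p k` with all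
separators `b_i` in `Ak a (k+1)` (`toeplitzBlock_chain`). A word of length at most `|p k| + 1`
occurring in such a concatenation starts in some `p k · b_i` and therefore ends inside the copy of
`p k` that follows, so it lies in `p k · b_i · p k` (`SepChain.infix_of_length_le`). Blocks `p m`
with `m ≤ k` are factors of `p k`, so the language can be tested on blocks with `m ≥ k` alone.
-/

open Filter

/-- `SepChain p S w` says that `w = p b₁ p b₂ ⋯ b_r p` for some `r ≥ 0` and letters `b_i ∈ S`. -/
inductive SepChain {A : Type*} (p : List A) (S : Set A) : List A → Prop
  | base : SepChain p S p
  | step (b : A) (w : List A) : b ∈ S → SepChain p S w → SepChain p S (p ++ [b] ++ w)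

lemma SepChain.append {A : Type*} {p : List A} {S : Set A} {v w : List A} {b : A}
    (hv : SepChain p S v) (hb : b ∈ S) (hw : SepChain p S w) :
    SepChain p S (v ++ [b] ++ w) := by
  induction hv with
  | base => exact .step b w hb hw
  | step c v hc _ ih =>
    have h := SepChain.step c _ hc ih
    simpa [List.append_assoc] using h

lemma SepChain.block_isPrefix_of {A : Type*} {p : List A} {S : Set A} {w : List A}
    (hw : SepChain p S w) : p <+: w := by
  cases hw with
  | base => exact List.prefix_rfl
  | step b w _ _ => exact ⟨[b] ++ w, by simp⟩

/-- The nonemptiness of `S`, given by the element `b₀`, matters only for the chain `p` without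
separators. -/
lemma SepChain.infix_of_length_le {A : Type*} {p : List A} {S : Set A} {w u : List A} {b₀ : A}
    (hb₀ : b₀ ∈ S) (hw : SepChain p S w) (hu : u <:+: w) (hlen : u.length ≤ p.length + 1) :
    ∃ b ∈ S, u <:+: p ++ [b] ++ p := by
  induction hw with
  | base => exact ⟨b₀, hb₀, hu.trans ⟨[], [b₀] ++ p, by simp⟩⟩
  | step b w hb hw ih =>
    obtain ⟨s, t, hst⟩ := hu
    by_cases hs : s.length ≤ p.length
    · -- `u` starts inside `p b`, so it ends before the next copy of `p` does.
      have h₁ : s ++ u <+: p ++ [b] ++ w := ⟨t, hst⟩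
      have h₂ : p ++ [b] ++ p <+: p ++ [b] ++ w := (List.prefix_append_right_inj _).2 hw.block_isPrefix_of
      have h₃ : s ++ u <+: p ++ [b] ++ p :=
        List.prefix_of_prefix_length_le h₁ h₂ (by simp; omega)
      exact ⟨b, hb, (List.infix_append' s u []).trans (by simpa using h₃.isInfix)⟩
    · -- `u` starts after the first `p b`, so it is a factor of the shorter chain.
      have h₁ : s <+: p ++ [b] ++ w := ⟨u ++ t, by simpa using hst⟩
      have h₂ : p ++ [b] <+: s :=
        List.prefix_of_prefix_length_le (List.prefix_append _ w) h₁ (by simp; omega)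
      obtain ⟨r, rfl⟩ := h₂
      refine ih ⟨r, t, ?_⟩
      simpa [List.append_assoc] using hst

lemma intercalate_replicate_succ {A : Type*} (c : A) (v : List A) (m : ℕ) :
    List.intercalate [c] (List.replicate (m + 2) v) =
      v ++ [c] ++ List.intercalate [c] (List.replicate (m + 1) v) := by
  simp [List.replicate_succ, List.intercalate_cons_cons]

lemma SepChain.intercalate {A : Type*} {p : List A} {S : Set A} {v : List A} {c : A}
    (hv : SepChain p S v) (hc : c ∈ S) (m : ℕ) :
    SepChain p S (List.intercalate [c] (List.replicate (m + 1) v)) := by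
  induction m with
  | zero => simpa using hv
  | succ m ih =>
    rw [intercalate_replicate_succ]
    exact hv.append hc ih

lemma toeplitzBlock_chain {A : Type*} (a : ℕ → A) (n : ℕ → ℕ) (hn : ∀ k, 2 ≤ n k) (k d : ℕ) :
    SepChain (ToeplitzBlock a n k) (Ak a (k + 1)) (ToeplitzBlock a n (k + d)) := by
  induction d with
  | zero => exact .base
  | succ d ih =>
    obtain ⟨m, hm⟩ := Nat.exists_eq_add_of_le' (hn (k + d + 1))
    have h := ih.intercalate (c := a (k + d + 1)) ⟨k + d + 1, by omega, rfl⟩ (m + 1)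
    rw [← add_assoc, ToeplitzBlock, hm]
    exact h

/-- every word of the language of length at most `|p k| + 1` is a
factor of `p k · b · p k` for some letter `b ∈ A (k+1)`. -/
theorem stmt1 {A : Type*} [Fintype A] [Nonempty A]
    (a : ℕ → A) (n : ℕ → ℕ) (hn : ∀ k, 2 ≤ n k) (ha : ∀ k, a k ≠ a (k + 1))
    (hAev : 2 ≤ (Aev a).ncard)
    (k : ℕ) (u : List A) (hu : u ∈ ToeplitzLang a n)
    (hlen : u.length ≤ (ToeplitzBlock a n k).length + 1) :
    ∃ b ∈ Ak a (k + 1), u <:+: (ToeplitzBlock a n k ++ [b] ++ ToeplitzBlock a n k) := by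
  obtain ⟨m, hm⟩ := hu
  -- Enlarging the index of the block to `k + m` keeps `u` a factor and makes it a chain over `p k`.
  have h : u <:+: ToeplitzBlock a n (k + m) := by
    have hc := (toeplitzBlock_chain a n hn m k).block_isPrefix_of
    rw [add_comm m k] at hc
    exact hm.trans hc.isInfix
  exact (toeplitzBlock_chain a n hn k m).infix_of_length_le
    (b₀ := a (k + 1)) ⟨k + 1, le_rfl, rfl⟩ h hlen
end

section
/- For every k ≥ 0 and every L with 0 ≤ L ≤ |p_k| − |p_{k−1}| − 1, the growth of the complexity function satisfies C(L+1) − C(L) ≥ #A_k − 1. -/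
/-!
Every word `w` of the language can be prolonged to the right by one letter: if `w` is a factor of
`p j`, then `p j a_{j+1}` is a prefix of `p (j+1)`. Hence dropping the last letter maps words of
length `L + 1` onto words of length `L`, and it suffices to exhibit one word `u` of length `L`
that can be prolonged by every letter of `A_k` (`cmpl_add_le`).

This word is the suffix of `p k` of length `L`. For `j > k`, the block `p k` is a suffix of
`p (j-1)`, and `p (j-1) a_j` is a prefix of `p j`, so `u a_j` is in the language. For the letter
`a_k` itself, `p k` minus its last `|p (k-1)| + 1` letters is a word `q` that is both a prefix of
`p k` followed by `a_k` and a suffix of `p k` (`exists_border`); since `L ≤ |q|`, the word `u` is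
a suffix of `q`, so `u a_k` is in the language too.
-/

open Filter

namespace SimpleToeplitz

variable {A : Type*}

/-- Peeling off the first of at least two copies of `p`. -/
lemma intercalate_cons (c : A) (p : List A) (m : ℕ) :
    List.intercalate [c] (List.replicate (m + 2) p)
      = p ++ [c] ++ List.intercalate [c] (List.replicate (m + 1) p) := by
  simp [List.intercalate, List.replicate_succ]

/-- Peeling off the last of at least two copies of `p`. -/
lemma intercalate_concat (c : A) (p : List A) (m : ℕ) :
    List.intercalate [c] (List.replicate (m + 2) p)
      = List.intercalate [c] (List.replicate (m + 1) p) ++ [c] ++ p := by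
  induction m with
  | zero => simp [List.intercalate, List.replicate_succ]
  | succ m ih =>
    calc _ = p ++ [c] ++ List.intercalate [c] (List.replicate (m + 2) p) :=
          intercalate_cons c p (m + 1)
      _ = p ++ [c] ++ List.intercalate [c] (List.replicate (m + 1) p) ++ [c] ++ p := by
          rw [ih]; simp only [List.append_assoc]
      _ = _ := by rw [← intercalate_cons]

variable (a : ℕ → A) (n : ℕ → ℕ)

lemma block_succ_eq_cons (hn : ∀ k, 2 ≤ n k) (k : ℕ) :
    ∃ r, ToeplitzBlock a n (k + 1) = ToeplitzBlock a n k ++ [a (k + 1)] ++ r := by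
  obtain ⟨m, hm⟩ := Nat.exists_eq_add_of_le' (hn (k + 1))
  exact ⟨_, by rw [ToeplitzBlock, hm, intercalate_cons]⟩

lemma block_suffix (hn : ∀ k, 2 ≤ n k) {i j : ℕ} (hij : i ≤ j) :
    ToeplitzBlock a n i <:+ ToeplitzBlock a n j := by
  induction j, hij using Nat.le_induction with
  | base => exact List.suffix_rfl
  | succ j _ ih =>
    refine ih.trans ?_
    obtain ⟨m, hm⟩ := Nat.exists_eq_add_of_le' (hn (j + 1))
    rw [ToeplitzBlock, hm, intercalate_concat]
    exact List.suffix_append _ _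

/-- The block `p k` minus its last `|p (k-1)| + 1` letters is a border of `p k`, and as a prefix
it is followed by the letter `a k`. -/
lemma exists_border (hn : ∀ k, 2 ≤ n k) (k : ℕ) :
    ∃ q, q ++ [a k] <+: ToeplitzBlock a n k ∧ q <:+ ToeplitzBlock a n k ∧
      q.length + lenPrev a n k + 1 = (ToeplitzBlock a n k).length := by
  obtain ⟨m, hm⟩ := Nat.exists_eq_add_of_le' (hn k)
  cases k with
  | zero =>
    have h : ToeplitzBlock a n 0 = List.replicate (m + 1) (a 0) := by
      rw [ToeplitzBlock, hm]; rfl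
    refine ⟨List.replicate m (a 0), ?_, ?_, ?_⟩
    · rw [h, List.replicate_succ']
    · rw [h, List.replicate_succ]
      exact List.suffix_cons _ _
    · simp [h, lenPrev]
  | succ k =>
    refine ⟨List.intercalate [a (k + 1)] (List.replicate (m + 1) (ToeplitzBlock a n k)),
      ?_, ?_, ?_⟩
    · rw [ToeplitzBlock, hm, intercalate_concat]
      exact List.prefix_append _ _
    · rw [ToeplitzBlock, hm, intercalate_cons]
      exact List.suffix_append _ _
    · rw [ToeplitzBlock, hm, intercalate_concat]
      simp only [lenPrev, List.length_append, List.length_singleton]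
      omega

lemma lang_of_infix {u v : List A} (h : u <:+: v) (hv : v ∈ ToeplitzLang a n) :
    u ∈ ToeplitzLang a n := by
  obtain ⟨k, hk⟩ := hv
  exact ⟨k, h.trans hk⟩

lemma block_concat_mem (hn : ∀ k, 2 ≤ n k) (k : ℕ) :
    ToeplitzBlock a n k ++ [a (k + 1)] ∈ ToeplitzLang a n := by
  obtain ⟨r, hr⟩ := block_succ_eq_cons a n hn k
  exact ⟨k + 1, hr ▸ (List.prefix_append _ r).isInfix⟩

lemma suffix_concat {u v : List A} (h : u <:+ v) (c : A) : u ++ [c] <:+ v ++ [c] := by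
  obtain ⟨t, rfl⟩ := h
  exact ⟨t, by simp⟩

lemma exists_right_extension (hn : ∀ k, 2 ≤ n k) {w : List A} (hw : w ∈ ToeplitzLang a n) :
    ∃ c, w ++ [c] ∈ ToeplitzLang a n := by
  obtain ⟨j, s, t, hst⟩ := hw
  have h := block_concat_mem a n hn j
  rw [← hst] at h
  -- the letter following `w` is the first letter of `t a_{j+1}`
  cases t with
  | nil => exact ⟨a (j + 1), lang_of_infix a n ⟨s, [], by simp⟩ h⟩
  | cons c t => exact ⟨c, lang_of_infix a n ⟨s, t ++ [a (j + 1)], by simp⟩ h⟩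

/-- The suffix of `p k` of length `L ≤ |p k| - |p (k-1)| - 1` can be prolonged by every letter
of `A_k`. -/
lemma exists_special (hn : ∀ k, 2 ≤ n k) (k L : ℕ)
    (hL : L + lenPrev a n k + 1 ≤ (ToeplitzBlock a n k).length) :
    ∃ u, u ∈ ToeplitzLang a n ∧ u.length = L ∧ ∀ c ∈ Ak a k, u ++ [c] ∈ ToeplitzLang a n := by
  obtain ⟨q, hqp, hqs, hql⟩ := exists_border a n hn k
  have huq : q.drop (q.length - L) <:+ q := List.drop_suffix _ _
  refine ⟨q.drop (q.length - L), ⟨k, (huq.trans hqs).isInfix⟩, ?_, ?_⟩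
  · rw [List.length_drop]
    omega
  · rintro c ⟨j, hj, rfl⟩
    rcases hj.eq_or_lt with rfl | hj
    · exact ⟨k, (suffix_concat huq _).isInfix.trans hqp.isInfix⟩
    · obtain ⟨i, rfl⟩ : ∃ i, j = i + 1 := ⟨j - 1, by omega⟩
      have hs := (huq.trans hqs).trans (block_suffix a n hn (Nat.le_of_lt_succ hj))
      exact lang_of_infix a n (suffix_concat hs _).isInfix (block_concat_mem a n hn i)

/-- A word of length `L` with right extensions by all letters of `E` forces the complexity to grow
by at least `#E - 1`. -/
lemma cmpl_add_le [Finite A] (hn : ∀ k, 2 ≤ n k) {L : ℕ} {u : List A}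
    (hu : u ∈ ToeplitzLang a n) (huL : u.length = L) (E : Set A)
    (hE : ∀ c ∈ E, u ++ [c] ∈ ToeplitzLang a n) :
    cmpl a n L + E.ncard ≤ cmpl a n (L + 1) + 1 := by
  set S : Set (List A) := {w | w ∈ ToeplitzLang a n ∧ w.length = L} with hS
  set T : Set (List A) := {w | w ∈ ToeplitzLang a n ∧ w.length = L + 1} with hT
  have hSfin : S.Finite := (List.finite_length_eq A L).subset fun w hw => hw.2
  have hTfin : T.Finite := (List.finite_length_eq A (L + 1)).subset fun w hw => hw.2
  have : Nonempty A := ⟨a 0⟩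
  choose! f hf using fun w (hw : w ∈ ToeplitzLang a n) => exists_right_extension a n hn hw
  -- one extension of each word other than `u`, and the extensions of `u` by `E`
  set X : Set (List A) := (fun w => w ++ [f w]) '' (S \ {u}) with hX
  set Y : Set (List A) := (fun c => u ++ [c]) '' E with hY
  have hXT : X ⊆ T := by
    rintro _ ⟨w, ⟨hw, -⟩, rfl⟩
    exact ⟨hf w hw.1, by simp [hw.2]⟩
  have hYT : Y ⊆ T := by
    rintro _ ⟨c, hc, rfl⟩
    exact ⟨hE c hc, by simp [huL]⟩
  have hXY : Disjoint X Y := by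
    rw [Set.disjoint_left]
    rintro _ ⟨w, ⟨-, hwu⟩, rfl⟩ ⟨c, -, hc⟩
    exact hwu (List.append_inj_left' hc rfl).symm
  have hXc : X.ncard = (S \ {u}).ncard :=
    Set.ncard_image_of_injective _ fun w w' h => List.append_inj_left' h rfl
  have hYc : Y.ncard = E.ncard :=
    Set.ncard_image_of_injective _ fun c c' h => by simpa using h
  have hSc : (S \ {u}).ncard + 1 = S.ncard :=
    Set.ncard_sdiff_singleton_add_one ⟨hu, huL⟩ hSfin
  have hle : (X ∪ Y).ncard ≤ T.ncard := Set.ncard_le_ncard (Set.union_subset hXT hYT) hTfin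
  rw [Set.ncard_union_eq hXY (hTfin.subset hXT) (hTfin.subset hYT)] at hle
  change S.ncard + E.ncard ≤ T.ncard + 1
  omega

end SimpleToeplitz

/-- for `0 ≤ L ≤ |p k| - |p (k-1)| - 1` the complexity grows by at
least `#A k - 1`. -/
theorem stmt3 {A : Type*} [Fintype A] [Nonempty A]
    (a : ℕ → A) (n : ℕ → ℕ) (hn : ∀ k, 2 ≤ n k) (ha : ∀ k, a k ≠ a (k + 1))
    (hAev : 2 ≤ (Aev a).ncard)
    (k L : ℕ) (hL : L + lenPrev a n k + 1 ≤ (ToeplitzBlock a n k).length) :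
    ((Ak a k).ncard : ℤ) - 1 ≤ (cmpl a n (L + 1) : ℤ) - (cmpl a n L : ℤ) := by
  obtain ⟨u, hu, huL, hE⟩ := SimpleToeplitz.exists_special a n hn k L hL
  have := SimpleToeplitz.cmpl_add_le a n hn hu huL (Ak a k) hE
  omega
end

section
/- Let k ≥ 1 and let L satisfy |p_{k−1}| + 1 ≤ L ≤ 2|p_{k−1}| − |p_{k−2}|. If a_{k−1} ∈ A_{k+1}, then the growth of the complexity exceeds by at least one the bound of the previous proposition: C(L+1) − C(L) ≥ #A_k whenever additionally L ≤ |p_k| − |p_{k−1}| − 1, and in any case C(L+1) − C(L) ≥ #A_{k+1}. -/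
/-!
The difference `C (L+1) - C L` is the sum, over all words `u` of length `L` in the language, of
(number of right extensions of `u`) `- 1`, and every word of the language has at least one right
extension (`card_growth`, `exists_right_ext`).  So it suffices to exhibit two distinct words of
length `L`, one with at least `#A_k` (resp. `#A_{k+1}`) right extensions and one with at least two.

* The suffix of length `L` of `p_k` can be followed by every letter of `A_{k+1}`, since
  `p_k a_m p_k` occurs in `p_m` for `m > k` (`block_letter_block_mem`).  If moreover
  `L ≤ |p_k| - |p_{k-1}| - 1`, it is a suffix of `p_{k-1} a_k ⋯ a_k p_{k-1}` with `n_k - 1` copies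
  of `p_{k-1}`, and can thus also be followed by `a_k`.
* As `a_{k-1}` lies in `A_{k+1}`, the word `p_k a_{k-1} p_k`, hence also
  `p_{k-1} a_{k-1} p_{k-1} a_k`, belongs to the language.  The word `p_{k-1} a_{k-1} p_{k-1}` is
  made of `2 n_{k-1}` copies of `p_{k-2}` separated by `a_{k-1}`, so deleting the first or the last
  period leaves the same word `v`, of length `2|p_{k-1}| - |p_{k-2}|`; it can be followed by both
  `a_{k-1}` and `a_k`.  The suffix of length `L` of `v` inherits this.

The two words differ: at distance `|p_{k-1}| + 1 ≤ L` from the end, the first has the letter `a_k`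
and the second the letter `a_{k-1}`.
-/

open Filter

namespace ToeplitzAux

variable {A : Type*}

/-- `sepPow p x m` is the word `p x p x ⋯ x p` with `m` separators `x` (so `m + 1` copies of `p`). -/
def sepPow (p : List A) (x : A) : ℕ → List A
  | 0 => p
  | m + 1 => p ++ x :: sepPow p x m

theorem sepPow_add (p : List A) (x : A) (m m' : ℕ) :
    sepPow p x (m + m' + 1) = sepPow p x m ++ x :: sepPow p x m' := by
  induction m with
  | zero => simp [sepPow]
  | succ m ih =>
    rw [show m + 1 + m' + 1 = (m + m' + 1) + 1 by omega, sepPow, ih, sepPow]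
    simp

theorem sepPow_succ' (p : List A) (x : A) (m : ℕ) :
    sepPow p x (m + 1) = sepPow p x m ++ x :: p :=
  sepPow_add p x m 0

theorem sepPow_nil (x : A) (m : ℕ) : sepPow [] x m = List.replicate m x := by
  induction m with
  | zero => rfl
  | succ m ih => simp [sepPow, ih, List.replicate_succ]

theorem intercalate_eq_sepPow (p : List A) (x : A) (m : ℕ) :
    List.intercalate [x] (List.replicate (m + 1) p) = sepPow p x m := by
  induction m with
  | zero => simp [sepPow, List.intercalate]
  | succ m ih =>
    rw [sepPow, ← ih]
    simp [List.intercalate, List.replicate_succ]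

/-- The block `p (k-1)`, with `p (-1)` the empty word. -/
def prevBlock (a : ℕ → A) (n : ℕ → ℕ) : ℕ → List A
  | 0 => []
  | k + 1 => ToeplitzBlock a n k

theorem length_prevBlock (a : ℕ → A) (n : ℕ → ℕ) (k : ℕ) :
    (prevBlock a n k).length = lenPrev a n k := by
  cases k <;> rfl

/-- With the convention that `p (-1)` is empty, the recursion for the blocks also covers `p 0`. -/
theorem block_eq (a : ℕ → A) (n : ℕ → ℕ) (hn : ∀ k, 2 ≤ n k) (k : ℕ) :
    ∃ r, ToeplitzBlock a n k = sepPow (prevBlock a n k) (a k) (r + 1) := by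
  refine ⟨n k - 2, ?_⟩
  have h := hn k
  cases k with
  | zero =>
    rw [prevBlock, sepPow_nil, ToeplitzBlock]
    congr 1
    omega
  | succ k =>
    rw [prevBlock, ToeplitzBlock, ← intercalate_eq_sepPow]
    congr 2
    omega

theorem block_succ (a : ℕ → A) (n : ℕ → ℕ) (hn : ∀ k, 2 ≤ n k) (k : ℕ) :
    ∃ r, ToeplitzBlock a n (k + 1) = sepPow (ToeplitzBlock a n k) (a (k + 1)) (r + 1) :=
  block_eq a n hn (k + 1)

theorem prefix_sepPow (p : List A) (x : A) (m : ℕ) : p <+: sepPow p x m := by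
  cases m with
  | zero => exact List.prefix_rfl
  | succ m => exact List.prefix_append _ _

theorem suffix_sepPow (p : List A) (x : A) (m : ℕ) : p <:+ sepPow p x m := by
  cases m with
  | zero => exact List.suffix_rfl
  | succ m =>
    rw [sepPow_succ']
    exact (List.suffix_cons x p).trans (List.suffix_append _ _)

theorem block_affix (a : ℕ → A) (n : ℕ → ℕ) (hn : ∀ k, 2 ≤ n k) {k m : ℕ} (h : k ≤ m) :
    ToeplitzBlock a n k <+: ToeplitzBlock a n m ∧ ToeplitzBlock a n k <:+ ToeplitzBlock a n m := by
  induction m, h using Nat.le_induction with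
  | base => exact ⟨List.prefix_rfl, List.suffix_rfl⟩
  | succ m _ ih =>
    obtain ⟨r, hr⟩ := block_succ a n hn m
    rw [hr]
    exact ⟨ih.1.trans (prefix_sepPow _ _ _), ih.2.trans (suffix_sepPow _ _ _)⟩

theorem infix_append_cons {u v u' v' : List A} (x : A) (hu : u <:+ u') (hv : v <+: v') :
    u ++ x :: v <:+: u' ++ x :: v' := by
  obtain ⟨s, rfl⟩ := hu
  obtain ⟨t, rfl⟩ := hv
  exact ⟨s, t, by simp⟩

theorem lang_infix {a : ℕ → A} {n : ℕ → ℕ} {u v : List A} (hv : v ∈ ToeplitzLang a n)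
    (h : u <:+: v) : u ∈ ToeplitzLang a n := by
  obtain ⟨k, hk⟩ := hv
  exact ⟨k, h.trans hk⟩

/-- Every letter of `A_{k+1}` occurs between two copies of `p_k`. -/
theorem block_letter_block_mem (a : ℕ → A) (n : ℕ → ℕ) (hn : ∀ k, 2 ≤ n k) (k : ℕ) {x : A}
    (hx : x ∈ Ak a (k + 1)) :
    ToeplitzBlock a n k ++ x :: ToeplitzBlock a n k ∈ ToeplitzLang a n := by
  obtain ⟨m, hm, rfl⟩ := hx
  obtain ⟨m, rfl⟩ : ∃ m', m = m' + 1 := ⟨m - 1, by omega⟩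
  obtain ⟨r, hr⟩ := block_succ a n hn m
  have h := block_affix a n hn (show k ≤ m by omega)
  refine ⟨m + 1, ?_⟩
  rw [hr, sepPow]
  exact infix_append_cons _ h.2 (h.1.trans (prefix_sepPow _ _ _))

theorem exists_right_ext (a : ℕ → A) (n : ℕ → ℕ) (hn : ∀ k, 2 ≤ n k) {u : List A}
    (hu : u ∈ ToeplitzLang a n) : ∃ x, u ++ [x] ∈ ToeplitzLang a n := by
  obtain ⟨k, s, t, h⟩ := hu
  have hmem := block_letter_block_mem a n hn k (x := a (k + 1)) ⟨k + 1, le_rfl, rfl⟩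
  rw [← h] at hmem
  cases t with
  | nil => exact ⟨a (k + 1), lang_infix hmem ⟨s, s ++ u, by simp⟩⟩
  | cons y t => exact ⟨y, lang_infix hmem ⟨s, t ++ a (k + 1) :: (s ++ u ++ y :: t), by simp⟩⟩

/-- A word with right extensions by all of `B`, together with a second word having two distinct
right extensions, forces the complexity to grow by at least `#B`. -/
theorem card_growth [Fintype A] (a : ℕ → A) (n : ℕ → ℕ) (hn : ∀ k, 2 ≤ n k) (L : ℕ)
    (B : Set A) (s w : List A) (hs : s.length = L) (hw : w.length = L) (hsw : s ≠ w)
    (hB : ∀ x ∈ B, s ++ [x] ∈ ToeplitzLang a n) (hne : B.Nonempty)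
    (y z : A) (hyz : y ≠ z) (hy : w ++ [y] ∈ ToeplitzLang a n)
    (hz : w ++ [z] ∈ ToeplitzLang a n) :
    B.ncard + cmpl a n L ≤ cmpl a n (L + 1) := by
  classical
  have hfin : ∀ L, {u | u ∈ ToeplitzLang a n ∧ u.length = L}.Finite := fun L =>
    (List.finite_length_eq A L).subset fun u hu => hu.2
  set S := (hfin L).toFinset with hS
  set T := (hfin (L + 1)).toFinset with hT
  have hSc : cmpl a n L = S.card := Set.ncard_eq_toFinset_card _ (hfin L)
  have hTc : cmpl a n (L + 1) = T.card := Set.ncard_eq_toFinset_card _ (hfin (L + 1))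
  have memS : ∀ u, u ∈ S ↔ u ∈ ToeplitzLang a n ∧ u.length = L := fun u => by simp [hS]
  have memT : ∀ u, u ∈ T ↔ u ∈ ToeplitzLang a n ∧ u.length = L + 1 := fun u => by simp [hT]
  have hmap : Set.MapsTo List.dropLast (T : Set (List A)) (S : Set (List A)) := by
    intro u hu
    have hu' := (memT u).1 hu
    refine (memS _).2 ⟨lang_infix hu'.1 (List.dropLast_prefix u).isInfix, ?_⟩
    simp [hu'.2]
  have hfib : ∀ u ∈ S, ∀ E : Finset A, (∀ x ∈ E, u ++ [x] ∈ ToeplitzLang a n) →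
      E.card ≤ (T.filter fun b => b.dropLast = u).card := by
    intro u hu E hE
    have hinj : Function.Injective fun x : A => u ++ [x] := fun x y h => by simpa using h
    rw [← Finset.card_image_of_injective E hinj]
    refine Finset.card_le_card fun b hb => ?_
    obtain ⟨x, hx, rfl⟩ := Finset.mem_image.1 hb
    simp [memT, hE x hx, ((memS u).1 hu).2]
  have hsS : s ∈ S := by
    obtain ⟨x, hx⟩ := hne
    exact (memS s).2 ⟨lang_infix (hB x hx) (List.prefix_append _ _).isInfix, hs⟩
  have hwS : w ∈ S := (memS w).2 ⟨lang_infix hy (List.prefix_append _ _).isInfix, hw⟩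
  have hBpos : 0 < B.ncard := (Set.ncard_pos (Set.toFinite B)).2 hne
  rw [hSc, hTc, Finset.card_eq_sum_card_fiberwise hmap]
  have hle : ∑ u ∈ S, (1 + (if u = s then B.ncard - 1 else 0) + (if u = w then 1 else 0)) ≤
      ∑ u ∈ S, (T.filter fun b => b.dropLast = u).card := by
    refine Finset.sum_le_sum fun u hu => ?_
    by_cases h1 : u = s
    · subst h1
      have h := hfib u hu (Set.toFinite B).toFinset (fun x hx => hB x (by simpa using hx))
      rw [← Set.ncard_eq_toFinset_card] at h
      simp only [if_true, hsw, if_false]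
      omega
    · by_cases h2 : u = w
      · subst h2
        have h := hfib u hu {y, z} (by simp [hy, hz])
        rw [Finset.card_pair hyz] at h
        simpa [h1] using h
      · obtain ⟨x, hx⟩ := exists_right_ext a n hn ((memS u).1 hu).1
        have h := hfib u hu {x} (by simpa using hx)
        simpa [h1, h2] using h
  refine le_trans (le_of_eq ?_) hle
  simp only [Finset.sum_add_distrib, Finset.sum_ite_eq', hsS, hwS, if_true, Finset.sum_const,
    smul_eq_mul, mul_one]
  omega

/-- The core of the argument, with `j = k - 1`: for `B` a nonempty set of letters that can follow
the suffix of length `L` of `p_k`. -/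
theorem growth_aux [Fintype A] (a : ℕ → A) (n : ℕ → ℕ) (hn : ∀ k, 2 ≤ n k)
    (ha : ∀ k, a k ≠ a (k + 1)) (j L : ℕ) (hL1 : lenPrev a n (j + 1) + 1 ≤ L)
    (hL2 : L + lenPrev a n j ≤ 2 * lenPrev a n (j + 1)) (hmem : a j ∈ Ak a (j + 2))
    (B : Set A) (hne : B.Nonempty)
    (hB : ∀ s, s <:+ ToeplitzBlock a n (j + 1) → s.length = L →
      ∀ x ∈ B, s ++ [x] ∈ ToeplitzLang a n) :
    B.ncard + cmpl a n L ≤ cmpl a n (L + 1) := by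
  obtain ⟨r, hr⟩ := block_eq a n hn j
  obtain ⟨t, ht⟩ := block_succ a n hn j
  rw [← length_prevBlock, ← length_prevBlock] at hL2
  rw [← length_prevBlock] at hL1
  change (ToeplitzBlock a n j).length + 1 ≤ L at hL1
  change L + (prevBlock a n j).length ≤ 2 * (ToeplitzBlock a n j).length at hL2
  set q := prevBlock a n j with hq
  set p := ToeplitzBlock a n j with hp
  set P := ToeplitzBlock a n (j + 1) with hP
  -- `v` is `p (a j) p` with one period removed, at either end.
  set v := sepPow q (a j) (r + r + 1 + 1) with hv
  have hz1 : p ++ a j :: p = v ++ a j :: q := by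
    rw [hr, ← sepPow_add, hv, show r + 1 + (r + 1) + 1 = (r + r + 1 + 1) + 1 by omega,
      sepPow_succ']
  have hz2 : p ++ a j :: p = q ++ a j :: v := by
    rw [hr, ← sepPow_add, hv, show r + 1 + (r + 1) + 1 = (r + r + 1 + 1) + 1 by omega,
      sepPow]
  have hvp : a j :: p <:+ v := by
    rw [hr, hv, show r + r + 1 + 1 = r + (r + 1) + 1 by omega, sepPow_add]
    exact List.suffix_append _ _
  have hvlen : v.length + q.length = 2 * p.length := by
    have := congrArg List.length hz1
    simp only [List.length_append, List.length_cons] at this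
    omega
  have hPp : a (j + 1) :: p <:+ P := by
    rw [ht, sepPow_succ']
    exact List.suffix_append _ _
  have hPpre : p ++ [a (j + 1)] <+: P := by
    rw [ht, sepPow]
    exact ⟨sepPow p (a (j + 1)) t, by simp⟩
  have hPlen : 2 * p.length + 1 ≤ P.length := by
    have := congrArg List.length ht
    have h' := (prefix_sepPow p (a (j + 1)) t).length_le
    simp only [sepPow, List.length_append, List.length_cons] at this
    omega
  have hbig : p ++ a j :: (p ++ [a (j + 1)]) ∈ ToeplitzLang a n :=
    lang_infix (block_letter_block_mem a n hn (j + 1) hmem)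
      (infix_append_cons _ ((List.suffix_cons _ _).trans hPp) hPpre)
  have hvy : v ++ [a j] ∈ ToeplitzLang a n :=
    lang_infix hbig ⟨[], q ++ [a (j + 1)], by
      have := congrArg (· ++ [a (j + 1)]) hz1
      simpa using this.symm⟩
  have hvz : v ++ [a (j + 1)] ∈ ToeplitzLang a n :=
    lang_infix hbig ⟨q ++ [a j], [], by
      have := congrArg (· ++ [a (j + 1)]) hz2
      simpa using this.symm⟩
  have hsP := List.drop_suffix (P.length - L) P
  have hwv := List.drop_suffix (v.length - L) v
  have hslen : (P.drop (P.length - L)).length = L := by rw [List.length_drop]; omega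
  have hwlen : (v.drop (v.length - L)).length = L := by rw [List.length_drop]; omega
  set s := P.drop (P.length - L)
  set w := v.drop (v.length - L)
  have hext : ∀ x, v ++ [x] ∈ ToeplitzLang a n → w ++ [x] ∈ ToeplitzLang a n := fun x hx =>
    lang_infix hx (infix_append_cons x hwv List.prefix_rfl)
  refine card_growth a n hn L B s w hslen hwlen ?_ (hB s hsP hslen) hne
    (a j) (a (j + 1)) (ha j) (hext _ hvy) (hext _ hvz)
  intro hsw
  have h1 : a (j + 1) :: p <:+ w :=
    hsw ▸ List.suffix_of_suffix_length_le hPp hsP (by rw [hslen]; simpa using hL1)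
  have h2 : a j :: p <:+ w :=
    List.suffix_of_suffix_length_le hvp hwv (by rw [hwlen]; simpa using hL1)
  have h3 := (List.suffix_of_suffix_length_le h2 h1 (by simp)).eq_of_length (by simp)
  exact ha j (List.cons.inj h3).1

end ToeplitzAux

/-- for `k ≥ 1`, `|p (k-1)| + 1 ≤ L ≤ 2|p (k-1)| - |p (k-2)|` and
`a (k-1) ∈ A (k+1)`, the growth of the complexity exceeds the bound of the
previous proposition by at least one. -/
theorem stmt4 {A : Type*} [Fintype A] [Nonempty A]
    (a : ℕ → A) (n : ℕ → ℕ) (hn : ∀ k, 2 ≤ n k) (ha : ∀ k, a k ≠ a (k + 1))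
    (hAev : 2 ≤ (Aev a).ncard)
    (k : ℕ) (hk : 1 ≤ k) (L : ℕ)
    (hL1 : lenPrev a n k + 1 ≤ L)
    (hL2 : L + lenPrev a n (k - 1) ≤ 2 * lenPrev a n k)
    (hmem : a (k - 1) ∈ Ak a (k + 1)) :
    (L + lenPrev a n k + 1 ≤ (ToeplitzBlock a n k).length →
      ((Ak a k).ncard : ℤ) ≤ (cmpl a n (L + 1) : ℤ) - (cmpl a n L : ℤ)) ∧
    ((Ak a (k + 1)).ncard : ℤ) ≤ (cmpl a n (L + 1) : ℤ) - (cmpl a n L : ℤ) := by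
  obtain ⟨j, rfl⟩ : ∃ j, k = j + 1 := ⟨k - 1, by omega⟩
  rw [Nat.add_sub_cancel] at hL2 hmem
  have hB2 : ∀ s, s <:+ ToeplitzBlock a n (j + 1) → s.length = L →
      ∀ x ∈ Ak a (j + 2), s ++ [x] ∈ ToeplitzLang a n := fun s hs _ x hx =>
    ToeplitzAux.lang_infix (ToeplitzAux.block_letter_block_mem a n hn (j + 1) hx)
      (ToeplitzAux.infix_append_cons x hs (List.nil_prefix))
  constructor
  · intro hlen
    have := ToeplitzAux.growth_aux a n hn ha j L hL1 hL2 hmem (Ak a (j + 1))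
      ⟨_, j + 1, le_rfl, rfl⟩ (by
        rintro s hs hsl x ⟨m, hm, rfl⟩
        rcases Nat.lt_or_ge (j + 1) m with h | h
        · exact hB2 s hs hsl _ ⟨m, h, rfl⟩
        obtain rfl : m = j + 1 := le_antisymm h hm
        obtain ⟨t, ht⟩ := ToeplitzAux.block_succ a n hn j
        set p := ToeplitzBlock a n j with hp
        -- `c` is `p (j+1)` with its first (or last) copy of `p j` and one separator removed.
        set c := ToeplitzAux.sepPow p (a (j + 1)) t with hc
        have h1 : ToeplitzBlock a n (j + 1) = p ++ a (j + 1) :: c := ht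
        have h2 : ToeplitzBlock a n (j + 1) = c ++ a (j + 1) :: p := by
          rw [ht]
          exact ToeplitzAux.sepPow_succ' p (a (j + 1)) t
        have hcs : c <:+ ToeplitzBlock a n (j + 1) :=
          h1 ▸ (List.suffix_cons _ _).trans (List.suffix_append _ _)
        have hsc : s <:+ c := by
          refine List.suffix_of_suffix_length_le hs hcs ?_
          have h3 := congrArg List.length h1
          simp only [List.length_append, List.length_cons] at h3
          simp only [lenPrev, ← hp] at hlen
          omega
        refine ⟨j + 1, ?_⟩
        rw [h2]
        exact ToeplitzAux.infix_append_cons _ hsc List.nil_prefix)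
    omega
  · have := ToeplitzAux.growth_aux a n hn ha j L hL1 hL2 hmem (Ak a (j + 2)) ⟨_, hmem⟩ hB2
    show ((Ak a (j + 2)).ncard : ℤ) ≤ _
    omega
end

section
/- For every k ≥ 0 the complexity function satisfies the lower bound C(|p_k| + 1) ≥ (#A_k − 1)·(|p_k| + 1) + 𝟙_{A_{k+1}}(a_k)·(|p_{k−1}| + 1). -/
/-!
Write `p_k = (p_{k-1} a_k)^{n_k - 1} p_{k-1}`, with `p_{-1}` empty, and put `N = |p_k| + 1`,
`M = |p_{k-1}| + 1`, so that `N = n_k M`. For every `b ∈ A_{k+1}` the word `p_k b p_k` belongs to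
the language (`block_append_mem`), so all cyclic rotations of `p_k b`, which have length `N`, do as
well. They are counted as follows.

* Rotations of `p_k b` and `p_k c` with `b ≠ c` differ, because they have different letter counts.
* If `b ≠ a_k`, then `p_k b` has `N` distinct rotations (`rotate_ne_self`). Indeed, the letters of
  `p_k b` at positions `≡ -1 mod M` are all `a_k` except for the last one, which is `b`. A rotation
  by `0 < r < N` fixing the word would identify the last letter `b` with an `a_k` at a
  position `≡ -1 mod M` if `M ∣ r`; otherwise it would identify `b` and the first `a_k` with one and
  the same letter of `p_{k-1}`.
* `p_k a_k = (p_{k-1} a_k)^{n_k}` has at least `M` distinct rotations, because `p_{k-1} a_k` does by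
  the previous point and `a_k ≠ a_{k-1}` (for `k = 0` there is nothing to show, as `M = 1`).

Since `A_k = A_{k+1} ∪ {a_k}`, there are `#A_k - 1` letters of the second kind, and the third kind
occurs exactly when `a_k ∈ A_{k+1}`.
-/

open Filter

/-! ### Rotations of words -/

section Words

variable {A : Type*}

/-- The word `(q c)^m q`; every Toeplitz block has this shape. -/
def repWord (q : List A) (c : A) (m : ℕ) : List A :=
  (List.replicate m (q ++ [c])).flatten ++ q

lemma repWord_succ (q : List A) (c : A) (m : ℕ) :
    repWord q c (m + 1) = q ++ c :: repWord q c m := by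
  simp [repWord, List.replicate_succ]

lemma length_repWord (q : List A) (c : A) (m : ℕ) :
    (repWord q c m).length + 1 = (m + 1) * (q.length + 1) := by
  simp [repWord]; ring

/-- `(xy)^m x = x (yx)^m`. -/
lemma flatten_replicate_append (x y : List A) (m : ℕ) :
    (List.replicate m (x ++ y)).flatten ++ x = x ++ (List.replicate m (y ++ x)).flatten := by
  induction m with
  | zero => simp
  | succ m ih => simp [List.replicate_succ, ih]

/-- Away from the positions `≡ -1` modulo `|q| + 1`, the word `(q c)^m q b` repeats `q`. -/
lemma repWord_get_of_mod_lt (q : List A) (c b : A) (m i : ℕ)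
    (hi : i < (m + 1) * (q.length + 1)) (h : i % (q.length + 1) < q.length) :
    (repWord q c m ++ [b])[i]? = q[i % (q.length + 1)]? := by
  induction m generalizing i with
  | zero =>
    have h1 : i < q.length + 1 := by simpa using hi
    rw [Nat.mod_eq_of_lt h1] at h ⊢
    simp [repWord, List.getElem?_append_left h]
  | succ m ih =>
    rw [repWord_succ]
    by_cases h1 : i < q.length + 1
    · rw [Nat.mod_eq_of_lt h1] at h ⊢
      simp [List.getElem?_append_left h]
    · obtain ⟨j, rfl⟩ := Nat.exists_eq_add_of_le (not_lt.mp h1)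
      rw [Nat.add_mod_left] at h ⊢
      rw [← ih j (by rw [add_mul] at hi; omega) h]
      have e : q ++ c :: repWord q c m ++ [b] = (q ++ [c]) ++ (repWord q c m ++ [b]) := by simp
      rw [e, List.getElem?_append_right (by simp)]
      simp

/-- At the positions `≡ -1` modulo `|q| + 1` other than the last, `(q c)^m q b` has letter `c`. -/
lemma repWord_get_of_mod_eq (q : List A) (c b : A) (m t : ℕ) (ht : t < m) :
    (repWord q c m ++ [b])[t * (q.length + 1) + q.length]? = some c := by
  induction m generalizing t with
  | zero => omega
  | succ m ih =>
    rw [repWord_succ]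
    cases t with
    | zero => simp
    | succ t =>
      have e : q ++ c :: repWord q c m ++ [b] = (q ++ [c]) ++ (repWord q c m ++ [b]) := by simp
      rw [e, List.getElem?_append_right (by simp), ← ih t (by omega)]
      congr 1
      simp
      rw [add_mul]; omega

lemma repWord_get_last (q : List A) (c b : A) (m : ℕ) :
    (repWord q c m ++ [b])[(m + 1) * (q.length + 1) - 1]? = some b := by
  rw [← length_repWord q c m]
  simp

/-- For `m ≥ 1` and `b ≠ c` the word `(q c)^m q b` has no nontrivial rotation symmetry. -/
lemma rotate_ne_self (q : List A) (c b : A) (m r : ℕ) (hm : 1 ≤ m) (hb : b ≠ c)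
    (hr0 : 0 < r) (hr : r < (m + 1) * (q.length + 1)) :
    (repWord q c m ++ [b]).rotate r ≠ repWord q c m ++ [b] := by
  intro hrot
  have hlen : (repWord q c m ++ [b]).length = (m + 1) * (q.length + 1) := by
    simp [length_repWord]
  have key : ∀ i, i < (m + 1) * (q.length + 1) →
      (repWord q c m ++ [b])[(i + r) % ((m + 1) * (q.length + 1))]? =
        (repWord q c m ++ [b])[i]? := by
    intro i hi
    have h := List.getElem?_rotate (l := repWord q c m ++ [b]) (n := r) (hlen ▸ hi)
    rw [hrot, hlen] at h
    exact h.symm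
  have hlast := repWord_get_last q c b m
  have hbr : (repWord q c m ++ [b])[r - 1]? = some b := by
    rw [← hlast, ← key ((m + 1) * (q.length + 1) - 1) (by omega)]
    congr 1
    rw [show (m + 1) * (q.length + 1) - 1 + r = (m + 1) * (q.length + 1) + (r - 1) by omega,
      Nat.add_mod_left, Nat.mod_eq_of_lt (by omega)]
  by_cases hd : (r - 1) % (q.length + 1) < q.length
  · -- position `r - 1` lies inside a copy of `q`, and so does the image of the first `c`
    rw [repWord_get_of_mod_lt q c b m _ (by omega) hd] at hbr
    have hM : q.length < (m + 1) * (q.length + 1) := by nlinarith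
    have h0 := repWord_get_of_mod_eq q c b m 0 (by omega)
    rw [zero_mul, zero_add, ← key _ hM] at h0
    have hmod : (q.length + r) % ((m + 1) * (q.length + 1)) % (q.length + 1)
        = (r - 1) % (q.length + 1) := by
      rw [Nat.mod_mul_left_mod, show q.length + r = (q.length + 1) + (r - 1) by omega,
        Nat.add_mod_left]
    rw [repWord_get_of_mod_lt q c b m _ (Nat.mod_lt _ (by omega)) (by rw [hmod]; exact hd),
      hmod, hbr] at h0
    exact hb (Option.some.inj h0)
  · have hlt := Nat.mod_lt (r - 1) (Nat.succ_pos q.length)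
    have hdiv := Nat.div_add_mod (r - 1) (q.length + 1)
    set t := (r - 1) / (q.length + 1) with ht
    have heq : r - 1 = t * (q.length + 1) + q.length := by
      rw [mul_comm]; simp only [Nat.succ_eq_add_one] at hlt; omega
    have htm : t < m := by
      by_contra hcon
      have : m * (q.length + 1) ≤ t * (q.length + 1) := Nat.mul_le_mul_right _ (by omega)
      rw [add_mul] at hr
      omega
    rw [heq, repWord_get_of_mod_eq q c b m t htm] at hbr
    exact hb (Option.some.inj hbr).symm

/-- If a rotation by `r ≤ |w|` fixes a power `w^(m+1)`, then it fixes `w`. -/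
lemma rotate_eq_self_of_pow (w : List A) (m r : ℕ) (hr : r ≤ w.length)
    (h : ((List.replicate (m + 1) w).flatten).rotate r = (List.replicate (m + 1) w).flatten) :
    w.rotate r = w := by
  obtain ⟨x, y, rfl, rfl⟩ : ∃ x y, w = x ++ y ∧ r = x.length :=
    ⟨w.take r, w.drop r, by simp, by simp [hr]⟩
  rw [List.rotate_append_length_eq]
  rw [List.replicate_succ, List.flatten_cons, List.append_assoc,
    List.rotate_append_length_eq, List.append_assoc, flatten_replicate_append,
    ← List.append_assoc, ← List.append_assoc] at h
  exact (List.append_inj h (by simp [add_comm])).1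

/-- `i ↦ l.rotate i` is injective on `[0, R)` if no rotation by `0 < r < R` fixes `l`. -/
lemma rotate_inj_of_ne (l : List A) (R i j : ℕ)
    (h : ∀ r, 0 < r → r < R → l.rotate r ≠ l) (hi : i < R) (hj : j < R)
    (he : l.rotate i = l.rotate j) : i = j := by
  wlog hij : i ≤ j generalizing i j
  · exact (this j i hj hi he.symm (by omega)).symm
  by_contra hne
  refine h (j - i) (by omega) (by omega) (List.rotate_injective i ?_)
  change (l.rotate (j - i)).rotate i = l.rotate i
  rw [List.rotate_rotate, he]
  congr 1
  omega

/-- The last letter of `p b` can be recovered from any rotation. -/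
lemma eq_of_rotate_append_eq (p : List A) (b c : A) (i j : ℕ)
    (h : (p ++ [b]).rotate i = (p ++ [c]).rotate j) : b = c := by
  have hp : (p ++ [b]).Perm (p ++ [c]) :=
    (List.rotate_perm _ i).symm.trans (h ▸ List.rotate_perm _ j)
  simpa using (List.perm_append_left_iff p).mp hp

/-- Every rotation of `p b` is a factor of `p b p`. -/
lemma rotate_infix (p : List A) (b : A) (i : ℕ) (hi : i ≤ p.length) :
    (p ++ [b]).rotate i <:+: p ++ b :: p := by
  refine ⟨p.take i, p.drop i, ?_⟩
  rw [List.rotate_eq_drop_append_take (by simp; omega), List.drop_append_of_le_length hi,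
    List.take_append_of_le_length hi]
  have e : p.take i ++ (p.drop i ++ [b] ++ p.take i) ++ p.drop i
      = (p.take i ++ p.drop i) ++ b :: (p.take i ++ p.drop i) := by
    simp only [List.append_assoc, List.cons_append, List.nil_append]
  rw [e, List.take_append_drop]

end Words

/-! ### Toeplitz blocks -/

section Blocks

variable {A : Type*}

/-- The previous block `p_{k-1}`, with `p_{-1}` the empty word. -/
def prevBlock (a : ℕ → A) (n : ℕ → ℕ) : ℕ → List A
  | 0 => []
  | k + 1 => ToeplitzBlock a n k

lemma length_prevBlock (a : ℕ → A) (n : ℕ → ℕ) (k : ℕ) :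
    (prevBlock a n k).length = lenPrev a n k := by
  cases k <;> rfl

lemma intercalate_replicate_eq (q : List A) (c : A) (m : ℕ) :
    List.intercalate [c] (List.replicate (m + 1) q) = repWord q c m := by
  induction m with
  | zero => simp [repWord]
  | succ m ih =>
    rw [repWord_succ, ← ih, List.replicate_succ, List.replicate_succ]
    simp [List.intercalate]

lemma block_eq_repWord (a : ℕ → A) (n : ℕ → ℕ) (hn : ∀ k, 2 ≤ n k) (k : ℕ) :
    ToeplitzBlock a n k = repWord (prevBlock a n k) (a k) (n k - 1) := by
  have h := hn k
  cases k with
  | zero => simp [ToeplitzBlock, repWord, prevBlock]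
  | succ k =>
    rw [← intercalate_replicate_eq, Nat.sub_add_cancel (by omega)]
    rfl

lemma block_succ_eq (a : ℕ → A) (n : ℕ → ℕ) (hn : ∀ k, 2 ≤ n k) (k : ℕ) :
    ∃ m, ToeplitzBlock a n (k + 1) = repWord (ToeplitzBlock a n k) (a (k + 1)) (m + 1) := by
  have h := hn (k + 1)
  refine ⟨n (k + 1) - 2, ?_⟩
  rw [block_eq_repWord a n hn (k + 1), show n (k + 1) - 2 + 1 = n (k + 1) - 1 by omega]
  rfl

lemma block_prefix_suffix (a : ℕ → A) (n : ℕ → ℕ) (hn : ∀ k, 2 ≤ n k) (k j : ℕ) (h : k ≤ j) :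
    ToeplitzBlock a n k <+: ToeplitzBlock a n j ∧
      ToeplitzBlock a n k <:+ ToeplitzBlock a n j := by
  induction j, h using Nat.le_induction with
  | base => exact ⟨List.prefix_rfl, List.suffix_rfl⟩
  | succ j _ ih =>
    obtain ⟨m, hm⟩ := block_succ_eq a n hn j
    refine ⟨ih.1.trans ?_, ih.2.trans ?_⟩
    · rw [hm, repWord_succ]; exact List.prefix_append _ _
    · rw [hm]; exact ⟨_, rfl⟩

/-- For `b ∈ A_{k+1}` the word `p_k b p_k` belongs to the language. -/
lemma block_append_mem (a : ℕ → A) (n : ℕ → ℕ) (hn : ∀ k, 2 ≤ n k) (k : ℕ) (b : A)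
    (hb : b ∈ Ak a (k + 1)) :
    ToeplitzBlock a n k ++ b :: ToeplitzBlock a n k ∈ ToeplitzLang a n := by
  obtain ⟨j, hj, rfl⟩ := hb
  obtain ⟨j, rfl⟩ : ∃ i, j = i + 1 := ⟨j - 1, by omega⟩
  obtain ⟨m, hm⟩ := block_succ_eq a n hn j
  obtain ⟨⟨t, ht⟩, -⟩ := block_prefix_suffix a n hn k j (by omega)
  obtain ⟨-, ⟨s, hs⟩⟩ := block_prefix_suffix a n hn k j (by omega)
  -- the first separator `a (j + 1)` of `p_{j+1}` is preceded by `p_j` and followed by `p_j`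
  obtain ⟨u, hu⟩ : ∃ u, repWord (ToeplitzBlock a n j) (a (j + 1)) m
      = ToeplitzBlock a n j ++ u := by
    cases m with
    | zero => exact ⟨[], by simp [repWord]⟩
    | succ m => exact ⟨_, repWord_succ _ _ _⟩
  refine ⟨j + 1, s, t ++ u, ?_⟩
  rw [hm, repWord_succ, hu]
  nth_rewrite 2 [← ht]
  rw [← hs]
  simp

/-- For `b ≠ a_k` no nontrivial rotation fixes `p_k b`. -/
lemma block_rotate_ne (a : ℕ → A) (n : ℕ → ℕ) (hn : ∀ k, 2 ≤ n k) (k : ℕ) (b : A)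
    (hb : b ≠ a k) (r : ℕ) (hr0 : 0 < r) (hr : r < (ToeplitzBlock a n k).length + 1) :
    (ToeplitzBlock a n k ++ [b]).rotate r ≠ ToeplitzBlock a n k ++ [b] := by
  have h := hn k
  rw [block_eq_repWord a n hn k] at hr ⊢
  rw [length_repWord] at hr
  exact rotate_ne_self _ _ _ _ _ (by omega) hb hr0 hr

/-- No rotation by `0 < r ≤ |p_{k-1}|` fixes `p_k a_k`. -/
lemma block_rotate_ne' (a : ℕ → A) (n : ℕ → ℕ) (hn : ∀ k, 2 ≤ n k)
    (ha : ∀ k, a k ≠ a (k + 1)) (k : ℕ)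
    (r : ℕ) (hr0 : 0 < r) (hr : r < lenPrev a n k + 1) :
    (ToeplitzBlock a n k ++ [a k]).rotate r ≠ ToeplitzBlock a n k ++ [a k] := by
  cases k with
  | zero => simp [lenPrev] at hr; omega
  | succ k =>
    intro h
    have e : ToeplitzBlock a n (k + 1) ++ [a (k + 1)] = (List.replicate (n (k + 1) - 1 + 1)
        (ToeplitzBlock a n k ++ [a (k + 1)])).flatten := by
      rw [block_eq_repWord a n hn (k + 1), List.replicate_succ']
      simp [repWord, prevBlock]
    rw [e] at h
    have hr' : r < (ToeplitzBlock a n k).length + 1 := hr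
    exact block_rotate_ne a n hn k _ (ha k).symm r hr0 hr'
      (rotate_eq_self_of_pow _ _ _ (by simp; omega) h)

lemma lenPrev_le (a : ℕ → A) (n : ℕ → ℕ) (hn : ∀ k, 2 ≤ n k) (k : ℕ) :
    lenPrev a n k ≤ (ToeplitzBlock a n k).length := by
  rw [block_eq_repWord a n hn k, ← length_prevBlock]
  simp [repWord]

end Blocks

/- STATEMENT 5: lower bound for the complexity at word length `|p k| + 1`. -/
open Classical in
theorem stmt5 {A : Type*} [Fintype A] [Nonempty A]
    (a : ℕ → A) (n : ℕ → ℕ) (hn : ∀ k, 2 ≤ n k) (ha : ∀ k, a k ≠ a (k + 1))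
    (hAev : 2 ≤ (Aev a).ncard) (k : ℕ) :
    (((Ak a k).ncard : ℤ) - 1) * (((ToeplitzBlock a n k).length : ℤ) + 1) +
        (if a k ∈ Ak a (k + 1) then 1 else 0) * ((lenPrev a n k : ℤ) + 1) ≤
      (cmpl a n ((ToeplitzBlock a n k).length + 1) : ℤ) := by
  have hfin : {u | u ∈ ToeplitzLang a n ∧ u.length = (ToeplitzBlock a n k).length + 1}.Finite :=
    (List.finite_length_eq A _).subset fun u hu => hu.2
  -- pairs `(b, i)` indexing pairwise distinct rotations of the words `p_k b`
  set B : Finset A := (Ak a (k + 1) \ {a k}).toFinset with hB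
  set E : Finset A := if a k ∈ Ak a (k + 1) then {a k} else ∅ with hE
  have hBE : ∀ b, b ∈ E → b = a k ∧ a k ∈ Ak a (k + 1) := by
    intro b hb
    rw [hE] at hb
    split_ifs at hb with h
    · exact ⟨Finset.mem_singleton.mp hb, h⟩
    · simp at hb
  have hBm : ∀ b, b ∈ B → b ∈ Ak a (k + 1) ∧ b ≠ a k := by
    intro b hb
    simpa [hB] using hb
  set T : Finset (A × ℕ) := B ×ˢ Finset.range ((ToeplitzBlock a n k).length + 1) ∪
    E ×ˢ Finset.range (lenPrev a n k + 1) with hT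
  have hle := lenPrev_le a n hn k
  have hTm : ∀ x ∈ T, x.1 ∈ Ak a (k + 1) ∧ x.2 < (ToeplitzBlock a n k).length + 1 ∧
      (x.1 = a k → x.2 < lenPrev a n k + 1) := by
    intro x hx
    rw [hT, Finset.mem_union, Finset.mem_product, Finset.mem_product, Finset.mem_range,
      Finset.mem_range] at hx
    rcases hx with ⟨h1, h2⟩ | ⟨h1, h2⟩
    · exact ⟨(hBm _ h1).1, h2, fun h => absurd h (hBm _ h1).2⟩
    · obtain ⟨h3, h4⟩ := hBE _ h1
      exact ⟨h3 ▸ h4, by omega, fun _ => h2⟩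
  have hcardT : T.card = B.card * ((ToeplitzBlock a n k).length + 1) +
      E.card * (lenPrev a n k + 1) := by
    rw [hT, Finset.card_union_of_disjoint, Finset.card_product, Finset.card_product,
      Finset.card_range, Finset.card_range]
    rw [Finset.disjoint_left]
    intro x hx hx'
    exact (hBm _ (Finset.mem_product.mp hx).1).2 (hBE _ (Finset.mem_product.mp hx').1).1
  have hTle : T.card ≤ cmpl a n ((ToeplitzBlock a n k).length + 1) := by
    rw [cmpl, ← Set.ncard_coe_finset]
    refine Set.ncard_le_ncard_of_injOn
      (fun x : A × ℕ => (ToeplitzBlock a n k ++ [x.1]).rotate x.2) ?_ ?_ hfin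
    · intro x hx
      obtain ⟨h1, h2, -⟩ := hTm x hx
      obtain ⟨j, hj⟩ := block_append_mem a n hn k x.1 h1
      exact ⟨⟨j, (rotate_infix _ _ _ (by omega)).trans hj⟩, by simp⟩
    · rintro ⟨b, i⟩ hx ⟨c, j⟩ hy hxy
      obtain ⟨-, hi, hi'⟩ := hTm _ hx
      obtain ⟨-, hj, hj'⟩ := hTm _ hy
      simp only at hxy hi hj hi' hj'
      obtain rfl := eq_of_rotate_append_eq _ _ _ _ _ hxy
      refine Prod.ext rfl ?_
      by_cases hb : b = a k
      · subst hb
        exact rotate_inj_of_ne _ _ i j (block_rotate_ne' a n hn ha k) (hi' rfl) (hj' rfl) hxy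
      · exact rotate_inj_of_ne _ _ i j (block_rotate_ne a n hn k b hb) hi hj hxy
  have hEc : (E.card : ℤ) = if a k ∈ Ak a (k + 1) then 1 else 0 := by
    rw [hE]; split_ifs <;> simp
  have hAc : (Ak a k).ncard = B.card + 1 := by
    have h1 : Ak a k = insert (a k) (B : Set A) := by
      ext x
      simp only [hB, Set.coe_toFinset, Set.mem_insert_iff, Set.mem_sdiff, Set.mem_singleton_iff]
      constructor
      · rintro ⟨j, hj, rfl⟩
        by_cases h : a j = a k
        · exact Or.inl h
        · refine Or.inr ⟨⟨j, ?_, rfl⟩, h⟩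
          rcases hj.eq_or_lt with rfl | h'
          · exact absurd rfl h
          · exact h'
      · rintro (rfl | ⟨⟨j, hj, rfl⟩, -⟩)
        · exact ⟨k, le_rfl, rfl⟩
        · exact ⟨j, by omega, rfl⟩
    rw [h1, Set.ncard_insert_of_notMem (fun h => (hBm _ h).2 rfl), Set.ncard_coe_finset]
  rw [← hEc, hAc]
  have := hcardT ▸ hTle
  zify at this
  push_cast
  linarith
end
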